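/- Let phi be a positive non-increasing function on positive integers with phi(1) = 1 and phi(d) -> 0. For any badly approximable Theta in k((X^{-1})), there exists an uncountable set B of badly approximable Phi in k((X^{-1})) such that for every Phi in B, the series 1, Theta, Phi are linearly independent over k[X], and there exist polynomials q of arbitrarily large degree with |q|^2 * ||q Theta|| * ||q Phi|| <= 1/phi(|q|). -/

import Mathlib

open Polynomial Filter

noncomputable section
open scoped Classical

namespace Littlewood

variable (k : Type*) [Field k]

/-- The element `X` of `k((X⁻¹))`: the inverse of the Laurent-series variable `t = X⁻¹`. -/
def XLS : LaurentSeries k := (HahnSeries.single (1 : ℤ) (1 : k))⁻¹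

variable {k}

/-- Embedding of `k[X]` into `k((X⁻¹))`, sending the polynomial variable to `X`. -/
def emb (p : Polynomial k) : LaurentSeries k := Polynomial.aeval (XLS k) p

/-- The degree of a Laurent series in `X⁻¹`: if `F = ∑_{h ≥ -m} f_h X^{-h}` with
`f_{-m} ≠ 0` then `deg F = m`. -/
def deg (F : LaurentSeries k) : ℤ := -F.order

/-- The norm `|F| = 2 ^ deg F`, with `|0| = 0`. -/
def lnorm (F : LaurentSeries k) : ℝ := if F = 0 then 0 else (2 : ℝ) ^ (deg F)

/-- Fractional part: the part of the series comprising only negative powers of `X`. -/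
def frac (F : LaurentSeries k) : LaurentSeries k where
  coeff n := if 1 ≤ n then F.coeff n else 0
  isPWO_support' := F.isPWO_support'.mono (fun n hn => by
    simp only [Function.mem_support] at hn ⊢
    intro h
    exact hn (by simp [h]))

/-- `‖F‖`: the norm of the fractional part of `F`. -/
def fnorm (F : LaurentSeries k) : ℝ := lnorm (frac F)

/-- `F` is a rational function. -/
def IsRat (F : LaurentSeries k) : Prop :=
  ∃ p q : Polynomial k, q ≠ 0 ∧ F * emb q = emb p

/-- The polynomial part of a Laurent series (the part with nonnegative powers of `X`). -/
def polyPart (F : LaurentSeries k) : Polynomial k :=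
  ∑ i ∈ Finset.range ((-F.order).toNat + 1), Polynomial.C (F.coeff (-(i : ℤ))) * Polynomial.X ^ i

/-- The complete quotients of the continued fraction algorithm applied to `F`. -/
def cfRem (F : LaurentSeries k) : ℕ → LaurentSeries k
  | 0 => F
  | n + 1 => (cfRem F n - emb (polyPart (cfRem F n)))⁻¹

/-- The partial quotients of the continued fraction expansion of `F`. -/
def pq (F : LaurentSeries k) (n : ℕ) : Polynomial k := polyPart (cfRem F n)

/-- Denominators `q_n` of the convergents of the continued fraction with
partial quotients `a`. -/
def den (a : ℕ → Polynomial k) : ℕ → Polynomial k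
  | 0 => 1
  | 1 => a 1
  | n + 2 => a (n + 2) * den a (n + 1) + den a n

/-- Numerators `p_n` of the convergents. -/
def num (a : ℕ → Polynomial k) : ℕ → Polynomial k
  | 0 => a 0
  | 1 => a 1 * a 0 + 1
  | n + 2 => a (n + 2) * num a (n + 1) + num a n

/-- The value of a finite continued fraction `[b_0, b_1, …, b_m]` over `k[X]`. -/
def finCF : List (Polynomial k) → LaurentSeries k
  | [] => 0
  | [b] => emb b
  | b :: l => emb b + (finCF l)⁻¹

/-- `F` is badly approximable. -/
def Bad (F : LaurentSeries k) : Prop :=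
  ∃ c : ℝ, 0 < c ∧ ∀ q : Polynomial k, q ≠ 0 → c ≤ lnorm (emb q) * fnorm (emb q * F)

section Norm

variable {k : Type*} [Field k]

@[simp] lemma emb_zero : emb (0 : k[X]) = 0 := map_zero _

@[simp] lemma emb_one : emb (1 : k[X]) = 1 := map_one _

@[simp] lemma emb_add (p q : k[X]) : emb (p + q) = emb p + emb q := map_add _ p q

@[simp] lemma emb_mul (p q : k[X]) : emb (p * q) = emb p * emb q := map_mul _ p q

@[simp] lemma emb_neg (p : k[X]) : emb (-p) = -emb p := map_neg _ p

@[simp] lemma emb_sub (p q : k[X]) : emb (p - q) = emb p - emb q := map_sub _ p q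

lemma coeff_emb (p : k[X]) (n : ℤ) :
    (emb p).coeff n = if n ≤ 0 then p.coeff (-n).toNat else 0 := by
  induction p using Polynomial.induction_on' with
  | add p q hp hq => rw [emb_add, HahnSeries.coeff_add, hp, hq]; split_ifs <;> simp
  | monomial i a =>
    have hC : algebraMap k (LaurentSeries k) a = HahnSeries.C a := HahnSeries.ofPowerSeries_C a
    have h : emb (monomial i a) = HahnSeries.single (-(i : ℤ)) a := by
      rw [emb, aeval_monomial, XLS, HahnSeries.inv_single, HahnSeries.single_pow,
        hC, HahnSeries.C_apply, HahnSeries.single_mul_single]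
      simp
    rw [h, HahnSeries.coeff_single, coeff_monomial]
    split_ifs <;> first | rfl | omega

lemma emb_injective : Function.Injective (emb : k[X] → LaurentSeries k) := by
  intro p q h
  ext i
  simpa [coeff_emb] using congrArg (fun F : LaurentSeries k => F.coeff (-(i : ℤ))) h

@[simp] lemma emb_eq_zero {p : k[X]} : emb p = 0 ↔ p = 0 :=
  ⟨fun h => emb_injective (by simpa using h), fun h => by simp [h]⟩

@[simp] lemma lnorm_zero : lnorm (0 : LaurentSeries k) = 0 := by simp [lnorm]

lemma lnorm_of_ne_zero {F : LaurentSeries k} (hF : F ≠ 0) : lnorm F = (2 : ℝ) ^ (-F.order) := by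
  simp [lnorm, hF, deg]

lemma lnorm_pos {F : LaurentSeries k} (hF : F ≠ 0) : 0 < lnorm F := by
  rw [lnorm_of_ne_zero hF]; positivity

lemma lnorm_nonneg (F : LaurentSeries k) : 0 ≤ lnorm F := by
  by_cases hF : F = 0
  · simp [hF]
  · exact (lnorm_pos hF).le

@[simp] lemma lnorm_one : lnorm (1 : LaurentSeries k) = 1 := by
  simp [lnorm_of_ne_zero]

@[simp] lemma lnorm_neg (F : LaurentSeries k) : lnorm (-F) = lnorm F := by
  simp [lnorm, deg, HahnSeries.order_neg]

@[simp] lemma lnorm_mul (F G : LaurentSeries k) : lnorm (F * G) = lnorm F * lnorm G := by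
  by_cases hF : F = 0
  · simp [hF]
  by_cases hG : G = 0
  · simp [hG]
  rw [lnorm_of_ne_zero hF, lnorm_of_ne_zero hG, lnorm_of_ne_zero (mul_ne_zero hF hG),
    HahnSeries.order_mul hF hG, ← zpow_add₀ two_ne_zero]
  congr 1
  ring

lemma lnorm_inv (F : LaurentSeries k) : lnorm F⁻¹ = (lnorm F)⁻¹ := by
  by_cases hF : F = 0
  · simp [hF]
  · refine eq_inv_of_mul_eq_one_left ?_
    rw [← lnorm_mul, inv_mul_cancel₀ hF, lnorm_one]

/-- The norm is at most `2 ^ (-n)` exactly when all coefficients below `n` vanish. -/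
lemma lnorm_le_iff {F : LaurentSeries k} {n : ℤ} :
    lnorm F ≤ (2 : ℝ) ^ (-n) ↔ ∀ i < n, F.coeff i = 0 := by
  by_cases hF : F = 0
  · simp only [hF, lnorm_zero, HahnSeries.coeff_zero, implies_true, iff_true]; positivity
  · rw [lnorm_of_ne_zero hF, zpow_le_zpow_iff_right₀ one_lt_two, neg_le_neg_iff,
      HahnSeries.le_order_iff_forall hF]

lemma lnorm_add_le_zpow {F G : LaurentSeries k} {n : ℤ} (hF : lnorm F ≤ (2 : ℝ) ^ n)
    (hG : lnorm G ≤ (2 : ℝ) ^ n) : lnorm (F + G) ≤ (2 : ℝ) ^ n := by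
  rw [← neg_neg n, lnorm_le_iff] at *
  intro i hi
  simp [hF i hi, hG i hi]

lemma lnorm_add_le (F G : LaurentSeries k) : lnorm (F + G) ≤ max (lnorm F) (lnorm G) := by
  by_cases hF : F = 0
  · simp [hF]
  by_cases hG : G = 0
  · simp [hG]
  rcases le_total (lnorm F) (lnorm G) with h | h
  · rw [max_eq_right h, lnorm_of_ne_zero hG]
    exact lnorm_add_le_zpow (h.trans_eq (lnorm_of_ne_zero hG)) (lnorm_of_ne_zero hG).le
  · rw [max_eq_left h, lnorm_of_ne_zero hF]
    exact lnorm_add_le_zpow (lnorm_of_ne_zero hF).le (h.trans_eq (lnorm_of_ne_zero hF))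

lemma lnorm_add_lt {F G : LaurentSeries k} {c : ℝ} (hF : lnorm F < c) (hG : lnorm G < c) :
    lnorm (F + G) < c :=
  (lnorm_add_le F G).trans_lt (max_lt hF hG)

lemma lnorm_sub_lt {F G : LaurentSeries k} {c : ℝ} (hF : lnorm F < c) (hG : lnorm G < c) :
    lnorm (F - G) < c := by
  rw [sub_eq_add_neg]
  exact lnorm_add_lt hF (by simpa using hG)

lemma lnorm_add_eq_of_lt {F G : LaurentSeries k} (h : lnorm G < lnorm F) :
    lnorm (F + G) = lnorm F := by
  refine le_antisymm ((lnorm_add_le F G).trans (max_le le_rfl h.le)) ?_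
  by_contra! h'
  have := lnorm_sub_lt h' h
  simp at this

lemma lnorm_emb {p : k[X]} (hp : p ≠ 0) : lnorm (emb p) = (2 : ℝ) ^ p.natDegree := by
  have h : lnorm (emb p) = (2 : ℝ) ^ (p.natDegree : ℤ) := by
    refine le_antisymm ?_ ?_
    · rw [← neg_neg (p.natDegree : ℤ), lnorm_le_iff]
      intro i hi
      rw [coeff_emb, if_pos (by omega), coeff_eq_zero_of_natDegree_lt (by omega)]
    · have hp' : emb p ≠ 0 := by simpa using hp
      rw [lnorm_of_ne_zero hp']
      refine zpow_le_zpow_right₀ one_le_two ?_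
      have : (emb p).order ≤ -(p.natDegree : ℤ) :=
        HahnSeries.order_le_of_coeff_ne_zero (by simpa [coeff_emb] using hp)
      omega
  simpa using h

lemma one_le_lnorm_emb {p : k[X]} (hp : p ≠ 0) : 1 ≤ lnorm (emb p) := by
  rw [lnorm_emb hp]
  exact one_le_pow₀ one_le_two

lemma eq_zero_of_lnorm_emb_lt_one {p : k[X]} (h : lnorm (emb p) < 1) : p = 0 :=
  by_contra fun hp => (one_le_lnorm_emb hp).not_gt h

lemma frac_eq_sub (F : LaurentSeries k) : frac F = F - emb (polyPart F) := by
  ext n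
  rw [HahnSeries.coeff_sub, coeff_emb]
  have hc (i : ℕ) : (polyPart F).coeff i = F.coeff (-(i : ℤ)) := by
    simp only [polyPart, finsetSum_coeff, coeff_C_mul, coeff_X_pow, mul_ite, mul_one, mul_zero]
    rw [Finset.sum_ite_eq]
    split_ifs with h
    · rfl
    · rw [HahnSeries.coeff_eq_zero_of_lt_order]
      simp only [Finset.mem_range, not_lt] at h
      omega
  by_cases h : n ≤ 0
  · simp [frac, h, hc, show ¬ 1 ≤ n by omega]
  · simp [frac, h, show 1 ≤ n by omega]

lemma fnorm_eq (F : LaurentSeries k) : fnorm F = lnorm (F - emb (polyPart F)) := by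
  rw [fnorm, frac_eq_sub]

lemma fnorm_lt_one (F : LaurentSeries k) : fnorm F < 1 := by
  have h : lnorm (frac F) ≤ (2 : ℝ) ^ (-1 : ℤ) :=
    lnorm_le_iff.2 fun i hi => by simp [frac, show ¬ 1 ≤ i by omega]
  exact h.trans_lt (by norm_num)

lemma fnorm_nonneg (F : LaurentSeries k) : 0 ≤ fnorm F := lnorm_nonneg _

lemma fnorm_le (F : LaurentSeries k) (p : k[X]) : fnorm F ≤ lnorm (F - emb p) := by
  by_cases h : lnorm (F - emb p) < 1
  · have h1 := lnorm_sub_lt h ((fnorm_eq F).symm.trans_lt (fnorm_lt_one F))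
    rw [sub_sub_sub_cancel_left, ← emb_sub] at h1
    rw [fnorm_eq, sub_eq_zero.1 (eq_zero_of_lnorm_emb_lt_one h1)]
  · exact (fnorm_lt_one F).le.trans (not_lt.1 h)

end Norm

section Continuants

variable {k : Type*} [Field k] {a b : ℕ → k[X]}

@[simp] lemma den_zero (a : ℕ → k[X]) : den a 0 = 1 := rfl

@[simp] lemma den_one (a : ℕ → k[X]) : den a 1 = a 1 := rfl

lemma den_add_two (a : ℕ → k[X]) (n : ℕ) :
    den a (n + 2) = a (n + 2) * den a (n + 1) + den a n := rfl

@[simp] lemma num_zero (a : ℕ → k[X]) : num a 0 = a 0 := rfl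

@[simp] lemma num_one (a : ℕ → k[X]) : num a 1 = a 1 * a 0 + 1 := rfl

lemma num_add_two (a : ℕ → k[X]) (n : ℕ) :
    num a (n + 2) = a (n + 2) * num a (n + 1) + num a n := rfl

lemma den_congr {n : ℕ} (h : ∀ i ≤ n, a i = b i) : den a n = den b n := by
  induction n using Nat.twoStepInduction with
  | zero => rfl
  | one => exact h 1 le_rfl
  | more n ih₁ ih₂ =>
    rw [den_add_two, den_add_two, h _ le_rfl, ih₁ fun i hi => h i (by omega),
      ih₂ fun i hi => h i (by omega)]

lemma num_congr {n : ℕ} (h : ∀ i ≤ n, a i = b i) : num a n = num b n := by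
  induction n using Nat.twoStepInduction with
  | zero => exact h 0 le_rfl
  | one => rw [num_one, num_one, h 0 zero_le_one, h 1 le_rfl]
  | more n ih₁ ih₂ =>
    rw [num_add_two, num_add_two, h _ le_rfl, ih₁ fun i hi => h i (by omega),
      ih₂ fun i hi => h i (by omega)]

lemma num_mul_den_sub (a : ℕ → k[X]) (n : ℕ) :
    num a (n + 1) * den a n - num a n * den a (n + 1) = (-1) ^ n := by
  induction n with
  | zero => simp; ring
  | succ n ih =>
    rw [num_add_two, den_add_two, pow_succ, ← ih]
    ring

/-- If `b` continues from position `s + 2` with `a (i + 1), …, a 1`, the denominators of `b` are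
combinations of those of `a`. -/
lemma den_add_of_reverse {i s : ℕ} (h : ∀ l ≤ i, b (s + 2 + (i - l)) = a (l + 1)) :
    den b (s + 2 + i) = den b (s + 1) * den a (i + 1) + den b s * den a i := by
  induction i generalizing s with
  | zero =>
    have := h 0 le_rfl
    simp only [tsub_zero, add_zero, zero_add] at this
    simp [den_add_two, this, mul_comm]
  | succ i ih =>
    have h₁ : b (s + 2) = a (i + 2) := by simpa using h (i + 1) le_rfl
    have h₂ := ih (s := s + 1) fun l hl => by
      rw [← h l (by omega)]
      congr 1
      omega
    rw [show s + 2 + (i + 1) = s + 1 + 2 + i by ring, h₂, den_add_two, den_add_two a, h₁]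
    ring

lemma lnorm_den_succ (ha : ∀ n, 1 ≤ (a (n + 1)).natDegree) (n : ℕ) :
    den a n ≠ 0 ∧
      lnorm (emb (den a (n + 1))) = 2 ^ (a (n + 1)).natDegree * lnorm (emb (den a n)) := by
  have ha₀ (n : ℕ) : a (n + 1) ≠ 0 := fun h => by simpa [h] using ha n
  induction n with
  | zero => simp [lnorm_emb (ha₀ 0)]
  | succ n ih =>
    obtain ⟨h₀, h⟩ := ih
    have hpos : 0 < lnorm (emb (den a n)) := lnorm_pos (by simpa)
    have hlt (n : ℕ) : (1 : ℝ) < 2 ^ (a (n + 1)).natDegree :=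
      one_lt_pow₀ one_lt_two (by have := ha n; omega)
    have h₁ : lnorm (emb (den a n)) < lnorm (emb (den a (n + 1))) := by
      rw [h]
      exact lt_mul_of_one_lt_left hpos (hlt n)
    refine ⟨fun h0 => by simp [h0] at h₁; linarith, ?_⟩
    rw [den_add_two, emb_add, lnorm_add_eq_of_lt, emb_mul, lnorm_mul, lnorm_emb (ha₀ (n + 1))]
    rw [emb_mul, lnorm_mul, lnorm_emb (ha₀ (n + 1))]
    exact h₁.trans_le (le_mul_of_one_le_left (lnorm_nonneg _) (hlt (n + 1)).le)

lemma den_ne_zero (ha : ∀ n, 1 ≤ (a (n + 1)).natDegree) (n : ℕ) : den a n ≠ 0 :=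
  (lnorm_den_succ ha n).1

lemma natDegree_den_succ (ha : ∀ n, 1 ≤ (a (n + 1)).natDegree) (n : ℕ) :
    (den a (n + 1)).natDegree = (a (n + 1)).natDegree + (den a n).natDegree := by
  have h := (lnorm_den_succ ha n).2
  rw [lnorm_emb (den_ne_zero ha _), lnorm_emb (den_ne_zero ha _), ← pow_add] at h
  exact pow_right_injective₀ two_pos (by norm_num) h

lemma natDegree_den_lt (ha : ∀ n, 1 ≤ (a (n + 1)).natDegree) (n : ℕ) :
    (den a n).natDegree < (den a (n + 1)).natDegree := by
  rw [natDegree_den_succ ha]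
  have := ha n
  omega

lemma le_natDegree_den (ha : ∀ n, 1 ≤ (a (n + 1)).natDegree) (n : ℕ) :
    n ≤ (den a n).natDegree :=
  (strictMono_nat_of_lt_succ (natDegree_den_lt ha)).le_apply

lemma natDegree_den_le (ha : ∀ n, 1 ≤ (a (n + 1)).natDegree) {D : ℕ}
    (hD : ∀ n, (a (n + 1)).natDegree ≤ D) (n : ℕ) : (den a n).natDegree ≤ D * n := by
  induction n with
  | zero => simp
  | succ n ih =>
    rw [natDegree_den_succ ha, mul_add, mul_one]
    have := hD n
    omega

end Continuants

section Expansion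

variable {k : Type*} [Field k] {a b : ℕ → k[X]} {F : LaurentSeries k}

/-- `a` is the sequence of partial quotients of the irrational series `F`: its terms after the
first are nonconstant, and the convergents satisfy `|q_n F - p_n| = 1 / |q_{n+1}|`. -/
structure IsExpansion (a : ℕ → k[X]) (F : LaurentSeries k) : Prop where
  one_le_natDegree : ∀ n, 1 ≤ (a (n + 1)).natDegree
  lnorm_mul_eq_one : ∀ n,
    lnorm (emb (den a n) * F - emb (num a n)) * lnorm (emb (den a (n + 1))) = 1

lemma IsExpansion.lnorm_eq (h : IsExpansion a F) (n : ℕ) :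
    lnorm (emb (den a n) * F - emb (num a n)) = (2 ^ (den a (n + 1)).natDegree)⁻¹ := by
  rw [← lnorm_emb (den_ne_zero h.1 _)]
  exact eq_inv_of_mul_eq_one_left (h.2 n)

lemma IsExpansion.le_lnorm_sub (h : IsExpansion a F) {p q : k[X]} (hq : q ≠ 0) {n : ℕ}
    (hn : q.natDegree < (den a (n + 1)).natDegree) :
    (2 ^ (den a (n + 1)).natDegree)⁻¹ ≤ lnorm (emb q * F - emb p) := by
  set P := num a (n + 1)
  set Q := den a (n + 1)
  have hQ : Q ≠ 0 := den_ne_zero h.1 _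
  have hW : q * P - p * Q ≠ 0 := by
    intro hW
    have hdvd : Q ∣ q * (-1) ^ n := by
      rw [← num_mul_den_sub a n]
      refine ⟨p * den a n - q * num a n, ?_⟩
      linear_combination (den a n) * hW
    have := natDegree_le_of_dvd ((isUnit_one.neg.pow n).dvd_mul_right.1 hdvd) hq
    omega
  by_contra! hlt
  refine hW (eq_zero_of_lnorm_emb_lt_one ?_)
  have : emb (q * P - p * Q) = emb Q * (emb q * F - emb p) - emb q * (emb Q * F - emb P) := by
    simp only [emb_sub, emb_mul]
    ring
  rw [this]
  refine lnorm_sub_lt ?_ ?_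
  · rw [lnorm_mul, lnorm_emb hQ]
    exact (lt_inv_mul_iff₀ (by positivity)).1 (by simpa using hlt)
  · rw [lnorm_mul, h.lnorm_eq, lnorm_emb hq, ← div_eq_mul_inv, div_lt_one (by positivity)]
    exact pow_lt_pow_right₀ one_lt_two (hn.trans (natDegree_den_lt h.1 _))

lemma IsExpansion.bad (h : IsExpansion a F) {D : ℕ} (hD : ∀ n, (a (n + 1)).natDegree ≤ D) :
    Bad F := by
  refine ⟨(2 ^ D)⁻¹, by positivity, fun q hq => ?_⟩
  have hex : ∃ n, q.natDegree < (den a (n + 1)).natDegree :=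
    ⟨q.natDegree, le_natDegree_den h.1 (q.natDegree + 1)⟩
  have hle : (den a (Nat.find hex)).natDegree ≤ q.natDegree := by
    rcases hn : Nat.find hex with _ | n
    · simp
    · exact not_lt.1 (Nat.find_min hex (m := n) (by omega))
  rw [fnorm_eq, lnorm_emb hq]
  refine le_trans ?_ (mul_le_mul_of_nonneg_left
    (h.le_lnorm_sub hq (Nat.find_spec hex)) (by positivity))
  rw [natDegree_den_succ h.1, ← div_eq_mul_inv, le_div_iff₀ (by positivity), pow_add,
    inv_mul_le_iff₀ (by positivity)]
  gcongr
  · norm_num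
  · exact hD _
  · norm_num

lemma Bad.mul_ne_emb (hF : Bad F) {q : k[X]} (hq : q ≠ 0) (p : k[X]) :
    emb q * F ≠ emb p := by
  intro h
  obtain ⟨c, hc, H⟩ := hF
  have h₁ := fnorm_le (emb q * F) p
  rw [h, sub_self, lnorm_zero] at h₁
  have h₂ := H q hq
  rw [h, h₁.antisymm (fnorm_nonneg _), mul_zero] at h₂
  exact hc.not_ge h₂

lemma Bad.exists_natDegree_le (hF : Bad F) (h : IsExpansion a F) :
    ∃ M : ℕ, ∀ n, (a (n + 1)).natDegree ≤ M := by
  obtain ⟨c, hc, H⟩ := hF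
  obtain ⟨M, hM⟩ := pow_unbounded_of_one_lt c⁻¹ one_lt_two
  refine ⟨M, fun n => ?_⟩
  have hle := (H _ (den_ne_zero h.1 n)).trans
    (mul_le_mul_of_nonneg_left (fnorm_le _ (num a n)) (lnorm_nonneg _))
  rw [h.lnorm_eq, natDegree_den_succ h.1, lnorm_emb (den_ne_zero h.1 n), pow_add, mul_inv,
    mul_left_comm, mul_inv_cancel₀ (by positivity), mul_one, le_inv_comm₀ hc (by positivity)] at hle
  exact ((pow_lt_pow_iff_right₀ one_lt_two).1 (hle.trans_lt hM)).le

lemma IsExpansion.natDegree_eq (ha : IsExpansion a F) (hb : IsExpansion b F) {n : ℕ}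
    (h : ∀ i ≤ n, a i = b i) : (a (n + 1)).natDegree = (b (n + 1)).natDegree := by
  have h₁ := ha.lnorm_eq n
  rw [den_congr h, num_congr h, hb.lnorm_eq n] at h₁
  have h₂ := pow_right_injective₀ two_pos (by norm_num) (inv_injective h₁)
  simp only [natDegree_den_succ ha.1, natDegree_den_succ hb.1, den_congr h] at h₂
  omega

end Expansion

section Existence

variable {k : Type*} [Field k]

lemma cfRem_mul_ne_emb {F : LaurentSeries k}
    (hF : ∀ q : k[X], q ≠ 0 → ∀ p : k[X], emb q * F ≠ emb p) (n : ℕ) :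
    ∀ q : k[X], q ≠ 0 → ∀ p : k[X], emb q * cfRem F n ≠ emb p := by
  induction n with
  | zero => exact hF
  | succ n ih =>
    intro q hq p h
    set x := cfRem F n
    set a := polyPart x
    have hx : x - emb a ≠ 0 := fun h0 => ih 1 one_ne_zero a (by simpa using sub_eq_zero.1 h0)
    have h' : emb q * (x - emb a)⁻¹ = emb p := h
    have hp : p ≠ 0 := by
      rintro rfl
      simp [hx, hq] at h'
    rw [← div_eq_mul_inv, div_eq_iff hx] at h'
    refine ih p hp (q + p * a) ?_
    rw [emb_add, emb_mul, h']
    ring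

/-- The continued fraction algorithm yields the expansion of an irrational series. -/
lemma isExpansion_pq {F : LaurentSeries k}
    (hF : ∀ q : k[X], q ≠ 0 → ∀ p : k[X], emb q * F ≠ emb p) : IsExpansion (pq F) F := by
  have hne (n : ℕ) : cfRem F n - emb (pq F n) ≠ 0 := fun h0 =>
    cfRem_mul_ne_emb hF n 1 one_ne_zero (pq F n) (by simpa using sub_eq_zero.1 h0)
  have hsucc (n : ℕ) : cfRem F (n + 1) = (cfRem F n - emb (pq F n))⁻¹ := rfl
  have hlt (n : ℕ) : lnorm (cfRem F n - emb (pq F n)) < 1 :=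
    (fnorm_eq _).symm.trans_lt (fnorm_lt_one _)
  have hgt (n : ℕ) : 1 < lnorm (cfRem F (n + 1)) := by
    rw [hsucc, lnorm_inv]
    exact (one_lt_inv₀ (lnorm_pos (hne n))).2 (hlt n)
  have hnorm (n : ℕ) : lnorm (emb (pq F (n + 1))) = lnorm (cfRem F (n + 1)) := by
    have h := lnorm_add_eq_of_lt (F := cfRem F (n + 1))
      (G := -(cfRem F (n + 1) - emb (pq F (n + 1))))
      (by rw [lnorm_neg]; exact (hlt _).trans (hgt n))
    rw [← h]
    congr 1
    ring
  have hdeg (n : ℕ) : 1 ≤ (pq F (n + 1)).natDegree := by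
    have h := hgt n
    rw [← hnorm] at h
    have h0 : pq F (n + 1) ≠ 0 := by
      intro h0
      rw [h0, emb_zero, lnorm_zero] at h
      linarith
    rw [lnorm_emb h0] at h
    by_contra! hd
    rw [Nat.lt_one_iff.1 hd, pow_zero] at h
    exact lt_irrefl _ h
  have hrec (n : ℕ) : (emb (den (pq F) (n + 1)) * F - emb (num (pq F) (n + 1))) *
      cfRem F (n + 2) = -(emb (den (pq F) n) * F - emb (num (pq F) n)) := by
    have hx (n : ℕ) : (cfRem F n - emb (pq F n)) * cfRem F (n + 1) = 1 :=
      mul_inv_cancel₀ (hne n)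
    induction n with
    | zero =>
      have h₀ := hx 0
      have h₁ := hx 1
      have hF₀ : cfRem F 0 = F := rfl
      rw [hF₀] at h₀
      simp only [zero_add, Nat.reduceAdd] at h₀ h₁ ⊢
      simp only [den_one, num_one, den_zero, num_zero, emb_add, emb_mul, emb_one, one_mul]
      linear_combination (cfRem F 2) * h₀ - (F - emb (pq F 0)) * h₁
    | succ n ih =>
      have h₁ := hx (n + 2)
      rw [den_add_two, num_add_two]
      simp only [emb_add, emb_mul]
      linear_combination (cfRem F (n + 3)) * ih -
        (emb (den (pq F) (n + 1)) * F - emb (num (pq F) (n + 1))) * h₁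
  refine ⟨hdeg, fun n => ?_⟩
  induction n with
  | zero =>
    rw [den_one, hnorm, ← lnorm_mul, ← lnorm_one (k := k)]
    congr 1
    simpa [hsucc, cfRem, pq] using mul_inv_cancel₀ (hne 0)
  | succ n ih =>
    have hd := (lnorm_den_succ hdeg (n + 1)).2
    rw [← lnorm_emb (fun h => by simpa [h] using hdeg (n + 1)), hnorm] at hd
    rw [hd, ← mul_assoc, ← lnorm_mul, hrec, lnorm_neg, ih]

/-- A sequence of Laurent series with rapidly decreasing increments has a limit. -/
lemma exists_lnorm_sub_le {f : ℕ → LaurentSeries k} {e : ℕ → ℤ} (he : StrictMono e)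
    (he₀ : ∀ n : ℕ, (n : ℤ) ≤ e n) (hf : ∀ n, lnorm (f (n + 1) - f n) ≤ 2 ^ (-e n)) :
    ∃ F, ∀ n, lnorm (F - f n) ≤ 2 ^ (-e n) := by
  have hco (n d : ℕ) (i : ℤ) (hi : i < e n) : (f (n + d)).coeff i = (f n).coeff i := by
    induction d with
    | zero => rfl
    | succ d ih =>
      have := lnorm_le_iff.1 (hf (n + d)) i (hi.trans_le (he.monotone (by omega)))
      rw [HahnSeries.coeff_sub, sub_eq_zero] at this
      rw [← ih, ← this, add_assoc]
  have hco' (n m : ℕ) (i : ℤ) (hn : i < e n) (hm : i < e m) :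
      (f n).coeff i = (f m).coeff i := by
    rcases le_total n m with h | h <;> obtain ⟨d, rfl⟩ := Nat.exists_eq_add_of_le h
    · exact (hco n d i hn).symm
    · exact hco m d i hm
  have hlt (i : ℤ) : i < e (i + 1).toNat := by
    have := he₀ (i + 1).toNat
    omega
  have hbdd : BddBelow (Function.support fun i : ℤ => (f (i + 1).toNat).coeff i) := by
    refine ⟨min (e 0) (f 0).order, fun i hi => ?_⟩
    by_contra! h
    refine hi ?_
    beta_reduce
    rw [hco' _ 0 i (hlt i) (h.trans_le (min_le_left _ _))]
    exact HahnSeries.coeff_eq_zero_of_lt_order (h.trans_le (min_le_right _ _))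
  refine ⟨HahnSeries.ofSuppBddBelow _ hbdd, fun n => lnorm_le_iff.2 fun i hi => ?_⟩
  rw [HahnSeries.coeff_sub, HahnSeries.coeff_ofSuppBddBelow, hco' _ n i (hlt i) hi, sub_self]

/-- Every sequence of polynomials with nonconstant terms after the first is the sequence of
partial quotients of a Laurent series. -/
lemma exists_isExpansion {a : ℕ → k[X]} (ha : ∀ n, 1 ≤ (a (n + 1)).natDegree) :
    ∃ F, IsExpansion a F := by
  have hd (n : ℕ) : emb (den a n) ≠ 0 := by simpa using den_ne_zero ha n
  set f : ℕ → LaurentSeries k := fun n => emb (num a n) / emb (den a n)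
  set e : ℕ → ℤ := fun n => (den a n).natDegree + (den a (n + 1)).natDegree
  have hlt := natDegree_den_lt ha
  have he : StrictMono e := strictMono_nat_of_lt_succ fun n => by
    have := hlt n
    have := hlt (n + 1)
    simp only [e]
    omega
  have hdiff (n : ℕ) : lnorm (f (n + 1) - f n) = 2 ^ (-e n) := by
    have hnum : f (n + 1) - f n = (-1) ^ n * (emb (den a n) * emb (den a (n + 1)))⁻¹ := by
      have h := congrArg emb (num_mul_den_sub a n)
      rw [show emb ((-1 : k[X]) ^ n) = (-1) ^ n by simp [emb]] at h
      rw [← h]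
      have := hd n
      have := hd (n + 1)
      simp only [f, emb_sub, emb_mul]
      field_simp
    have hone : lnorm ((-1 : LaurentSeries k) ^ n) = 1 := by
      rcases neg_one_pow_eq_or (LaurentSeries k) n with h | h <;> simp [h]
    rw [hnum, lnorm_mul, lnorm_inv, lnorm_mul, hone, lnorm_emb (den_ne_zero ha _),
      lnorm_emb (den_ne_zero ha _), one_mul, ← pow_add, zpow_neg]
    simp only [e]
    norm_cast
  obtain ⟨F, hF⟩ := exists_lnorm_sub_le he
    (fun n => by have := le_natDegree_den ha n; simp only [e]; omega) fun n => (hdiff n).le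
  refine ⟨F, ha, fun n => ?_⟩
  have hFn : lnorm (F - f n) = 2 ^ (-e n) := by
    rw [← hdiff n, ← lnorm_add_eq_of_lt (F := f (n + 1) - f n) (G := F - f (n + 1))]
    · congr 1
      ring
    · rw [hdiff]
      exact (hF (n + 1)).trans_lt
        (zpow_lt_zpow_right₀ one_lt_two (neg_lt_neg (he n.lt_succ_self)))
  have : emb (den a n) * F - emb (num a n) = emb (den a n) * (F - f n) := by
    simp only [f]
    rw [mul_sub, mul_div_cancel₀ _ (hd n)]
  rw [this, lnorm_mul, hFn, lnorm_emb (den_ne_zero ha _), lnorm_emb (den_ne_zero ha _),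
    mul_right_comm, ← pow_add, zpow_neg]
  exact mul_inv_cancel₀ (by positivity)

end Existence

section Mirror

variable {k : Type*} [Field k] {a b : ℕ → k[X]} {F G : LaurentSeries k} {M : ℕ}

lemma natDegree_den_of_reverse (ha : ∀ n, 1 ≤ (a (n + 1)).natDegree)
    (hb : ∀ n, 1 ≤ (b (n + 1)).natDegree) {i s : ℕ}
    (h : ∀ l ≤ i, b (s + 2 + (i - l)) = a (l + 1)) :
    (den b (s + 2 + i)).natDegree = (den b (s + 1)).natDegree + (den a (i + 1)).natDegree := by
  rw [den_add_of_reverse h, natDegree_add_eq_left_of_natDegree_lt,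
    natDegree_mul (den_ne_zero hb _) (den_ne_zero ha _)]
  rw [natDegree_mul (den_ne_zero hb _) (den_ne_zero ha _),
    natDegree_mul (den_ne_zero hb _) (den_ne_zero ha _)]
  have := natDegree_den_lt ha i
  have := natDegree_den_lt hb s
  omega

lemma IsExpansion.lnorm_eq_of_reverse (ha : IsExpansion a F) (haM : ∀ n, (a (n + 1)).natDegree ≤ M)
    (hb : ∀ n, 1 ≤ (b (n + 1)).natDegree) {i s : ℕ} (hs : M < (b (s + 1)).natDegree)
    (h : ∀ l ≤ i, b (s + 2 + (i - l)) = a (l + 1)) :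
    lnorm (emb (den b (s + 2 + i)) * F -
      emb (den b (s + 1) * num a (i + 1) + den b s * num a i)) =
        2 ^ (den b (s + 1)).natDegree / 2 ^ (den a (i + 2)).natDegree := by
  have heq : emb (den b (s + 2 + i)) * F -
      emb (den b (s + 1) * num a (i + 1) + den b s * num a i) =
      emb (den b (s + 1)) * (emb (den a (i + 1)) * F - emb (num a (i + 1))) +
        emb (den b s) * (emb (den a i) * F - emb (num a i)) := by
    rw [den_add_of_reverse h]
    simp only [emb_add, emb_mul]
    ring
  have h₁ : lnorm (emb (den b (s + 1)) * (emb (den a (i + 1)) * F - emb (num a (i + 1)))) =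
      2 ^ (den b (s + 1)).natDegree / 2 ^ (den a (i + 2)).natDegree := by
    rw [lnorm_mul, lnorm_emb (den_ne_zero hb _), ha.lnorm_eq, div_eq_mul_inv]
  rw [heq, lnorm_add_eq_of_lt, h₁]
  rw [h₁, lnorm_mul, lnorm_emb (den_ne_zero hb _), ha.lnorm_eq, ← div_eq_mul_inv,
    div_lt_div_iff₀ (by positivity) (by positivity), ← pow_add, ← pow_add]
  refine pow_lt_pow_right₀ one_lt_two ?_
  rw [natDegree_den_succ hb s, natDegree_den_succ ha.1 (i + 1)]
  have := haM (i + 1)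
  omega

/-- The index `j` of the block `m j < x ≤ m (j + 1)` containing `x`. -/
def blockIndex (m : ℕ → ℕ) (x : ℕ) : ℕ := sInf {j | x ≤ m (j + 1)}

lemma blockIndex_eq {m : ℕ → ℕ} (hm : StrictMono m) {j x : ℕ} (h₁ : m j < x)
    (h₂ : x ≤ m (j + 1)) : blockIndex m x = j := by
  refine le_antisymm (Nat.sInf_le h₂) ?_
  have hmem : x ≤ m (blockIndex m x + 1) := Nat.sInf_mem (s := {j | x ≤ m (j + 1)}) ⟨j, h₂⟩
  exact Nat.lt_succ_iff.1 (hm.lt_iff_lt.1 (h₁.trans_le hmem))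

/-- The sequence which on each block `m j < x ≤ m (j + 1)` reads `t j, a n, …, a 1`. -/
def mirror (a : ℕ → k[X]) (m : ℕ → ℕ) (t : ℕ → k[X]) (x : ℕ) : k[X] :=
  if x = m (blockIndex m x) + 1 then t (blockIndex m x)
  else a (m (blockIndex m x + 1) + 1 - x)

variable {m : ℕ → ℕ} {t t' : ℕ → k[X]}

lemma mirror_succ (hm : StrictMono m) (j : ℕ) : mirror a m t (m j + 1) = t j := by
  have := hm (Nat.lt_succ_self j)
  rw [mirror, blockIndex_eq hm (Nat.lt_succ_self _) this, if_pos rfl]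

lemma mirror_eq (hm : StrictMono m) {j x : ℕ} (h₁ : m j + 1 < x) (h₂ : x ≤ m (j + 1)) :
    mirror a m t x = a (m (j + 1) + 1 - x) := by
  rw [mirror, blockIndex_eq hm (by omega) h₂, if_neg (by omega)]

lemma mirror_reverse (hm : StrictMono m) {i j : ℕ} (hi : m (j + 1) = m j + 2 + i) :
    ∀ l ≤ i, mirror a m t (m j + 2 + (i - l)) = a (l + 1) := by
  intro l hl
  rw [mirror_eq (j := j) hm (by omega) (by omega)]
  congr 1
  omega

lemma mirror_congr (hm : StrictMono m) {j x : ℕ} (h : ∀ i < j, t i = t' i) (hx : x ≤ m j) :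
    mirror a m t x = mirror a m t' x := by
  unfold mirror
  split_ifs with hx'
  · exact h _ (hm.lt_iff_lt.1 (by omega))
  · rfl

lemma mirror_induction (hm : StrictMono m) (hm₀ : m 0 = 0) {p : k[X] → Prop}
    (ha : ∀ n, p (a (n + 1))) (ht : ∀ j, p (t j)) (n : ℕ) : p (mirror a m t (n + 1)) := by
  obtain ⟨j, h₁, h₂⟩ : ∃ j, m j < n + 1 ∧ n + 1 ≤ m (j + 1) := by
    have hex : ∃ j, n + 1 ≤ m (j + 1) := ⟨n, hm.le_apply⟩
    refine ⟨Nat.find hex, ?_, Nat.find_spec hex⟩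
    rcases hj : Nat.find hex with _ | j
    · omega
    · exact not_le.1 (Nat.find_min hex (m := j) (by omega))
  rcases (Nat.succ_le_of_lt h₁).eq_or_lt with h | h
  · rw [← h, Nat.succ_eq_add_one, mirror_succ hm]
    exact ht j
  · rw [mirror_eq hm h h₂, Nat.sub_add_comm h₂]
    exact ha _

/-- The blocks are chosen so long that `φ` is tiny compared with the size of what precedes. -/
lemma exists_block_bounds {φ : ℕ → ℝ} (hφ : Tendsto φ atTop (nhds 0)) (M : ℕ) :
    ∃ m : ℕ → ℕ, m 0 = 0 ∧ ∀ j, ∃ i, m (j + 1) = m j + 2 + i ∧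
      φ (2 ^ (i + 1)) ≤ (2 ^ (2 * ((M + 2) * (m j + 1))))⁻¹ ∧
        (M + 3) * (m j + 1) ≤ i + 1 := by
  have hex (y : ℕ) : ∃ i, φ (2 ^ (i + 1)) ≤ (2 ^ (2 * ((M + 2) * (y + 1))))⁻¹ ∧
      (M + 3) * (y + 1) ≤ i + 1 := by
    have hlim : Tendsto (fun i : ℕ => φ (2 ^ (i + 1))) atTop (nhds 0) :=
      hφ.comp ((tendsto_pow_atTop_atTop_of_one_lt one_lt_two).comp (tendsto_add_atTop_nat 1))
    have hpos : (0 : ℝ) < (2 ^ (2 * ((M + 2) * (y + 1))))⁻¹ := by positivity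
    obtain ⟨i, hi, hi'⟩ := ((hlim.eventually_le_const hpos).and
      (eventually_ge_atTop ((M + 3) * (y + 1)))).exists
    exact ⟨i, hi, by omega⟩
  choose g hg using hex
  exact ⟨fun j => Nat.rec 0 (fun _ y => y + 2 + g y) j, rfl, fun j => ⟨_, rfl, hg _⟩⟩

lemma linearIndependent_of_reverse (ha : IsExpansion a F) (hb : IsExpansion b G)
    (haM : ∀ n, (a (n + 1)).natDegree ≤ M) (hbM : ∀ n, (b (n + 1)).natDegree ≤ M + 2)
    (hs : ∀ N, ∃ s i, N ≤ s ∧ M < (b (s + 1)).natDegree ∧ (M + 3) * (s + 1) ≤ i + 1 ∧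
      ∀ l ≤ i, b (s + 2 + (i - l)) = a (l + 1))
    {A B C : k[X]} (h : emb A * F + emb B * G + emb C = 0) : A = 0 ∧ B = 0 ∧ C = 0 := by
  have hA : A = 0 := by
    by_contra hA
    obtain ⟨s, i, hsN, hM, hsi, hrev⟩ := hs (A.natDegree + B.natDegree + M)
    set P := den b (s + 1) * num a (i + 1) + den b s * num a i
    set R := emb (den b (s + 2 + i)) * F - emb P
    set S := emb (den b (s + 2 + i)) * G - emb (num b (s + 2 + i))
    have hR : lnorm R = _ := ha.lnorm_eq_of_reverse haM hb.1 hM hrev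
    have hS : lnorm S = _ := hb.lnorm_eq _
    have hdeg := natDegree_den_of_reverse ha.1 hb.1 hrev
    have hlt := natDegree_den_lt hb.1 (s + 2 + i)
    have hβ := natDegree_den_le hb.1 hbM (s + 1)
    have hβ' := le_natDegree_den hb.1 (s + 1)
    have hδ := le_natDegree_den hb.1 (s + 2 + i + 1)
    have hα := le_natDegree_den ha.1 (i + 2)
    have hα' : (den a (i + 2)).natDegree = _ := natDegree_den_succ ha.1 (i + 1)
    have haM' := haM (i + 1)
    have hsi' : (M + 2) * (s + 1) + (s + 1) ≤ i + 1 := by linarith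
    have hAR : lnorm (emb A * R) < 1 := by
      rw [lnorm_mul, hR, lnorm_emb hA, ← mul_div_assoc, ← pow_add, div_lt_one (by positivity)]
      exact pow_lt_pow_right₀ one_lt_two (by omega)
    have hBS : lnorm (emb B * S) < 1 := by
      by_cases hB : B = 0
      · simp [hB]
      · rw [lnorm_mul, hS, lnorm_emb hB, ← div_eq_mul_inv, div_lt_one (by positivity)]
        exact pow_lt_pow_right₀ one_lt_two (by omega)
    have hW : emb (-(A * P + B * num b (s + 2 + i) + C * den b (s + 2 + i))) =
        emb A * R + emb B * S := by
      simp only [emb_neg, emb_add, emb_mul, R, S]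
      linear_combination (-emb (den b (s + 2 + i))) * h
    have hW₀ := eq_zero_of_lnorm_emb_lt_one ((congrArg lnorm hW).trans_lt (lnorm_add_lt hAR hBS))
    rw [hW₀, emb_zero] at hW
    have heq := congrArg lnorm (eq_neg_of_add_eq_zero_left hW.symm)
    rw [lnorm_neg, lnorm_mul, lnorm_mul, hR, hS, lnorm_emb hA] at heq
    by_cases hB : B = 0
    · rw [hB, emb_zero, lnorm_zero, zero_mul] at heq
      exact absurd heq (by positivity)
    · rw [lnorm_emb hB, ← mul_div_assoc, ← div_eq_mul_inv,
        div_eq_div_iff (by positivity) (by positivity), ← pow_add, ← pow_add, ← pow_add] at heq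
      have := pow_right_injective₀ (two_pos (α := ℝ)) (by norm_num) heq
      omega
  subst hA
  have hB : B = 0 := by
    by_contra hB
    refine (hb.bad hbM).mul_ne_emb hB (-C) ?_
    rw [emb_neg]
    simpa using eq_neg_of_add_eq_zero_left h
  subst hB
  simpa using h

lemma lnorm_sq_mul_fnorm_le_of_reverse (ha : IsExpansion a F) (hb : IsExpansion b G)
    (haM : ∀ n, (a (n + 1)).natDegree ≤ M) {s i : ℕ} (hs : M < (b (s + 1)).natDegree)
    (h : ∀ l ≤ i, b (s + 2 + (i - l)) = a (l + 1)) :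
    lnorm (emb (den b (s + 2 + i))) ^ 2 * fnorm (emb (den b (s + 2 + i)) * F) *
      fnorm (emb (den b (s + 2 + i)) * G) ≤ 2 ^ (2 * (den b (s + 1)).natDegree) := by
  have hF := (fnorm_le _ _).trans_eq (ha.lnorm_eq_of_reverse haM hb.1 hs h)
  have hG := (fnorm_le _ _).trans_eq (hb.lnorm_eq (s + 2 + i))
  have hdeg := natDegree_den_of_reverse ha.1 hb.1 h
  have h₁ := natDegree_den_lt hb.1 (s + 2 + i)
  have h₂ : _ < (den a (i + 2)).natDegree := natDegree_den_lt ha.1 (i + 1)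
  rw [lnorm_emb (den_ne_zero hb.1 _)]
  calc _ ≤ _ := mul_le_mul (mul_le_mul_of_nonneg_left hF (by positivity)) hG (fnorm_nonneg _)
        (by positivity)
    _ ≤ _ := by
      rw [← div_eq_mul_inv, ← mul_div_assoc, div_div, ← pow_mul, ← pow_add, ← pow_add,
        div_le_iff₀ (by positivity), ← pow_add]
      exact pow_le_pow_right₀ one_le_two (by omega)

end Mirror

theorem theorem1 {k : Type*} [Field k] (φ : ℕ → ℝ)
    (hφpos : ∀ d : ℕ, 1 ≤ d → 0 < φ d)
    (hφmono : ∀ d e : ℕ, 1 ≤ d → d ≤ e → φ e ≤ φ d)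
    (hφ1 : φ 1 = 1) (hφlim : Tendsto φ atTop (nhds 0))
    (Θ : LaurentSeries k) (hΘ : Bad Θ) :
    ∃ B : Set (LaurentSeries k), ¬ B.Countable ∧ ∀ Φ ∈ B, Bad Φ ∧
      (∀ A B' C : Polynomial k, emb A * Θ + emb B' * Φ + emb C = 0 →
        A = 0 ∧ B' = 0 ∧ C = 0) ∧
      ∀ N : ℕ, ∃ q : Polynomial k, q ≠ 0 ∧ N ≤ q.natDegree ∧
        lnorm (emb q) ^ 2 * fnorm (emb q * Θ) * fnorm (emb q * Φ) ≤
          1 / φ (2 ^ q.natDegree) := by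
  obtain ⟨a, ha⟩ : ∃ a, IsExpansion a Θ := ⟨_, isExpansion_pq fun _ hq => hΘ.mul_ne_emb hq⟩
  obtain ⟨M, haM⟩ := hΘ.exists_natDegree_le ha
  obtain ⟨m, hm₀, hm'⟩ := exists_block_bounds hφlim M
  have hm : StrictMono m := strictMono_nat_of_lt_succ fun j => by
    obtain ⟨i, hi, -⟩ := hm' j
    omega
  let t (ε : ℕ → Bool) (j : ℕ) : k[X] := X ^ (M + 1 + (ε j).toNat)
  let b (ε : ℕ → Bool) : ℕ → k[X] := mirror a m (t ε)
  have ht (ε : ℕ → Bool) (j : ℕ) : (t ε j).natDegree = M + 1 + (ε j).toNat := natDegree_X_pow _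
  have hb₁ (ε : ℕ → Bool) (n : ℕ) : 1 ≤ (b ε (n + 1)).natDegree :=
    mirror_induction hm hm₀ (p := fun f => 1 ≤ f.natDegree) ha.1 (fun j => by rw [ht]; omega) n
  have hbM (ε : ℕ → Bool) (n : ℕ) : (b ε (n + 1)).natDegree ≤ M + 2 :=
    mirror_induction hm hm₀ (p := fun f => f.natDegree ≤ M + 2) (fun n => (haM n).trans (by omega))
      (fun j => by rw [ht]; have := Bool.toNat_le (ε j); omega) n
  have hbt (ε : ℕ → Bool) (j : ℕ) : (b ε (m j + 1)).natDegree = M + 1 + (ε j).toNat := by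
    rw [← ht, ← mirror_succ (a := a) (t := t ε) hm j]
  choose Φ hΦ using fun ε => exists_isExpansion (hb₁ ε)
  have hinj : Function.Injective Φ := by
    intro ε ε' h
    ext1 j
    induction j using Nat.strong_induction_on with
    | _ j ih =>
      have hdeg := (hΦ ε).natDegree_eq (h ▸ hΦ ε') (n := m j) fun x hx =>
        mirror_congr hm (fun i hi => by simp only [t, ih i hi]) hx
      rw [hbt, hbt] at hdeg
      cases hj : ε j <;> cases hj' : ε' j <;> simp [hj, hj'] at hdeg ⊢
  refine ⟨Set.range Φ, fun hc => ?_, ?_⟩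
  · have : Countable (Set.range Φ) := hc
    have : Countable (ℕ → Bool) := (Set.rangeFactorization_injective.2 hinj).countable
    obtain ⟨f, hf⟩ := exists_surjective_nat (ℕ → Bool)
    obtain ⟨n, hn⟩ := hf fun n => !f n n
    simpa using congrFun hn n
  rintro _ ⟨ε, rfl⟩
  refine ⟨(hΦ ε).bad (hbM ε), fun A B C => linearIndependent_of_reverse ha (hΦ ε) haM (hbM ε)
    fun N => ?_, fun N => ?_⟩
  · obtain ⟨i, hi, -, hi'⟩ := hm' N
    exact ⟨m N, i, hm.le_apply, by rw [hbt]; omega, hi', mirror_reverse hm hi⟩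
  · obtain ⟨i, hi, hiφ, -⟩ := hm' N
    have hrev : ∀ l ≤ i, b ε (m N + 2 + (i - l)) = a (l + 1) := mirror_reverse hm hi
    set q := den (b ε) (m N + 2 + i)
    have hmN : N ≤ m N := hm.le_apply
    have hq : m N + 2 + i ≤ q.natDegree := le_natDegree_den (hb₁ ε) _
    refine ⟨q, den_ne_zero (hb₁ ε) _, by omega, ?_⟩
    refine (lnorm_sq_mul_fnorm_le_of_reverse ha (hΦ ε) haM (by rw [hbt]; omega) hrev).trans ?_
    rw [one_div]
    refine le_trans ?_ (inv_anti₀ (hφpos _ Nat.one_le_two_pow) ((hφmono _ _ Nat.one_le_two_pow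
      (Nat.pow_le_pow_right two_pos (by omega : i + 1 ≤ q.natDegree))).trans hiφ))
    rw [inv_inv]
    exact pow_le_pow_right₀ one_le_two
      (Nat.mul_le_mul_left 2 (natDegree_den_le (hb₁ ε) (hbM ε) (m N + 1)))

end Littlewood
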